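/- (Ahlfors–Schwarz lemma, current form) Let c : ℂ → ℝ≥0 be a function which locally is of the form φ·|f|², where φ is a smooth positive function and f a holomorphic function, and assume c is not identically zero. Then there is no positive real number ρ such that ∂_t ∂_{t̄} log c(t) ≥ ρ · c(t) holds on all of ℂ in the sense of currents (equivalently, in the sense of distributions). -/

import Mathlib

open MeasureTheory

/-- The Laplacian of a real-valued function on ℂ; note `∂_t ∂_{t̄} = (1/4)·Δ`. -/
noncomputable def lapC (φ : ℂ → ℝ) (t : ℂ) : ℝ :=
  fderiv ℝ (fun s => fderiv ℝ φ s 1) t 1 +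
    fderiv ℝ (fun s => fderiv ℝ φ s Complex.I) t Complex.I

/-- A real test function on ℂ: smooth with compact support. -/
def IsTestFun (φ : ℂ → ℝ) : Prop := ContDiff ℝ (⊤ : ℕ∞) φ ∧ HasCompactSupport φ

/-!
The argument is the Ahlfors comparison of the metric `c |dt|²` with the Poincaré metric of a large
disc. Testing against bump functions and integrating by parts turns the inequality of distributions
into the pointwise inequality `Δ log c ≥ 4 ρ c` on the open set `{c > 0}`. On the disc of radius `R`
around a point `a` with `c a > 0`, the function `c (R² - |t - a|²)²` vanishes on the boundary, so it
has an interior maximum `m`, with `c m > 0`. There `log c + 2 log (R² - |t - a|²)` has nonpositive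
Laplacian, and since `Δ log (R² - |t - a|²) = -4 R² / (R² - |t - a|²)²`, this says that
`ρ c (R² - |t - a|²)² ≤ 2 R²` at `m`, hence on the whole disc. At the center this reads
`ρ c(a) R² ≤ 2`, which is absurd for large `R`.
-/

open Topology

section TestFunctions

theorem continuous_mul_of_tsupport_subset {X M : Type*} [TopologicalSpace X] [TopologicalSpace M]
    [MulZeroClass M] [ContinuousMul M] {U : Set X} {u ψ : X → M} (hU : IsOpen U)
    (hu : ContinuousOn u U) (hψ : Continuous ψ) (hsub : tsupport ψ ⊆ U) :
    Continuous fun x => u x * ψ x :=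
  continuous_of_tsupport fun _ hx =>
    (hu.continuousAt (hU.mem_nhds (hsub (tsupport_mul_subset_right hx)))).mul hψ.continuousAt

theorem integrable_mul_of_tsupport_subset {X : Type*} [TopologicalSpace X] [MeasurableSpace X]
    [OpensMeasurableSpace X] {μ : Measure X} [IsFiniteMeasureOnCompacts μ] {U : Set X}
    {u ψ : X → ℝ} (hU : IsOpen U) (hu : ContinuousOn u U) (hψ : Continuous ψ)
    (hcomp : HasCompactSupport ψ) (hsub : tsupport ψ ⊆ U) : Integrable (fun x => u x * ψ x) μ :=
  (continuous_mul_of_tsupport_subset hU hu hψ hsub).integrable_of_hasCompactSupport hcomp.mul_left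

variable {E : Type*} [NormedAddCommGroup E] [NormedSpace ℝ E] {U : Set E} {u ψ : E → ℝ}

theorem contDiffAt_fderiv_apply_const {m n : WithTop ℕ∞} {x : E} (hu : ContDiffAt ℝ n u x)
    (hmn : m + 1 ≤ n) (v : E) : ContDiffAt ℝ m (fun y => fderiv ℝ u y v) x :=
  (hu.fderiv_right hmn).clm_apply contDiffAt_const

theorem contDiffOn_fderiv_apply_const {m n : WithTop ℕ∞} (hU : IsOpen U) (hu : ContDiffOn ℝ n u U)
    (hmn : m + 1 ≤ n) (v : E) : ContDiffOn ℝ m (fun y => fderiv ℝ u y v) U := fun _ hx =>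
  (contDiffAt_fderiv_apply_const (hu.contDiffAt (hU.mem_nhds hx)) hmn v).contDiffWithinAt

theorem contDiff_fderiv_apply_const {m n : WithTop ℕ∞} (hu : ContDiff ℝ n u) (hmn : m + 1 ≤ n)
    (v : E) : ContDiff ℝ m fun y => fderiv ℝ u y v :=
  contDiff_iff_contDiffAt.2 fun _ => contDiffAt_fderiv_apply_const hu.contDiffAt hmn v

variable [FiniteDimensional ℝ E] [MeasurableSpace E] [BorelSpace E] {μ : Measure E}

theorem nonneg_of_forall_integral_mul_nonneg [IsFiniteMeasureOnCompacts μ] [μ.IsOpenPosMeasure]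
    (hU : IsOpen U) (hu : ContinuousOn u U)
    (hint : ∀ ψ : E → ℝ, ContDiff ℝ (⊤ : ℕ∞) ψ → HasCompactSupport ψ → (∀ x, 0 ≤ ψ x) →
      tsupport ψ ⊆ U → 0 ≤ ∫ x, u x * ψ x ∂μ)
    {x : E} (hx : x ∈ U) : 0 ≤ u x := by
  by_contra! hneg
  have hnhds : U ∩ {y | u y < 0} ∈ 𝓝 x := Filter.inter_mem (hU.mem_nhds hx)
    ((hu.continuousAt (hU.mem_nhds hx)).eventually (eventually_lt_nhds hneg))
  obtain ⟨ψ, hsub, hcomp, hψ, hrange, hψx⟩ := exists_contDiff_tsupport_subset (n := ⊤) hnhds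
  have hψ_nonneg (y : E) : 0 ≤ ψ y := (hrange ⟨y, rfl⟩).1
  have hsubU : tsupport ψ ⊆ U := fun y hy => (hsub hy).1
  have hpos : 0 < ∫ y, -(u y * ψ y) ∂μ := by
    refine (continuous_mul_of_tsupport_subset hU hu hψ.continuous
      hsubU).neg.integral_pos_of_hasCompactSupport_nonneg_nonzero (x := x) hcomp.mul_left.neg
      (fun y => ?_) (by simpa [hψx] using hneg.ne)
    by_cases hy : y ∈ tsupport ψ
    · exact neg_nonneg.2 (mul_nonpos_of_nonpos_of_nonneg (hsub hy).2.le (hψ_nonneg y))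
    · simp [image_eq_zero_of_notMem_tsupport hy]
  rw [integral_neg] at hpos
  linarith [hint ψ hψ hcomp hψ_nonneg hsubU]

variable [μ.IsAddHaarMeasure]

theorem integral_mul_fderiv_apply_eq_neg (hU : IsOpen U) (hu : ContDiffOn ℝ 1 u U)
    (hψ : ContDiff ℝ 1 ψ) (hcomp : HasCompactSupport ψ) (hsub : tsupport ψ ⊆ U) (v : E) :
    ∫ x, u x * fderiv ℝ ψ x v ∂μ = -∫ x, fderiv ℝ u x v * ψ x ∂μ :=
  integral_mul_fderiv_eq_neg_fderiv_mul_of_integrable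
    (integrable_mul_of_tsupport_subset hU
      (contDiffOn_fderiv_apply_const hU hu (m := 0) (by simp) v).continuousOn
      hψ.continuous hcomp hsub)
    (integrable_mul_of_tsupport_subset hU hu.continuousOn
      (contDiff_fderiv_apply_const hψ (m := 0) (by simp) v).continuous
      (hcomp.fderiv_apply ℝ v) ((tsupport_fderiv_apply_subset ℝ v).trans hsub))
    (integrable_mul_of_tsupport_subset hU hu.continuousOn hψ.continuous hcomp hsub)
    (fun _ hx => (hu.contDiffAt (hU.mem_nhds (hsub hx))).differentiableAt (by simp))
    (fun _ _ => hψ.contDiffAt.differentiableAt (by simp))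

theorem integral_mul_fderiv_fderiv_apply (hU : IsOpen U) (hu : ContDiffOn ℝ 2 u U)
    (hψ : ContDiff ℝ 2 ψ) (hcomp : HasCompactSupport ψ) (hsub : tsupport ψ ⊆ U) (v w : E) :
    ∫ x, u x * fderiv ℝ (fun y => fderiv ℝ ψ y v) x w ∂μ =
      ∫ x, fderiv ℝ (fun y => fderiv ℝ u y w) x v * ψ x ∂μ := by
  rw [integral_mul_fderiv_apply_eq_neg hU (hu.of_le one_le_two)
      (contDiff_fderiv_apply_const hψ one_add_one_eq_two.le v) (hcomp.fderiv_apply ℝ v)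
      ((tsupport_fderiv_apply_subset ℝ v).trans hsub) w,
    integral_mul_fderiv_apply_eq_neg hU
      (contDiffOn_fderiv_apply_const hU hu one_add_one_eq_two.le w)
      (hψ.of_le one_le_two) hcomp hsub v, neg_neg]

end TestFunctions

section SecondDerivative

theorem deriv_deriv_nonpos_of_isLocalMax {h : ℝ → ℝ} {x : ℝ} (hmax : IsLocalMax h x)
    (hcont : ContinuousAt h x) : deriv (deriv h) x ≤ 0 := by
  by_contra! hpos
  have hmin : IsLocalMin h x := isLocalMin_of_deriv_deriv_pos hpos hmax.deriv_eq_zero hcont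
  have hconst : h =ᶠ[𝓝 x] fun _ => h x := by
    filter_upwards [hmax, hmin] with y hle hge using le_antisymm hle hge
  have hzero : deriv (deriv h) x = 0 := by simpa using hconst.deriv.deriv_eq
  exact hpos.ne' hzero

variable {E : Type*} [NormedAddCommGroup E] [NormedSpace ℝ E] {F : E → ℝ} {x : E}

theorem deriv_deriv_comp_add_smul (hF : ContDiffAt ℝ 2 F x) (v : E) :
    deriv (deriv fun r : ℝ => F (x + r • v)) 0 = fderiv ℝ (fun y => fderiv ℝ F y v) x v := by
  have hline (r : ℝ) : HasDerivAt (fun r : ℝ => x + r • v) v r := by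
    simpa using ((hasDerivAt_id r).smul_const v).const_add x
  have hderiv {G : E → ℝ} {r : ℝ} (hG : DifferentiableAt ℝ G (x + r • v)) :
      deriv (fun r : ℝ => G (x + r • v)) r = fderiv ℝ G (x + r • v) v :=
    (hG.hasFDerivAt.comp_hasDerivAt r (hline r)).deriv
  have hdiff : ∀ᶠ r : ℝ in 𝓝 0, DifferentiableAt ℝ F (x + r • v) := by
    refine (hline 0).continuousAt.eventually ?_
    simpa using (hF.eventually (by simp)).mono fun y hy => hy.differentiableAt (by simp)
  have hfirst : deriv (fun r : ℝ => F (x + r • v)) =ᶠ[𝓝 0] fun r => fderiv ℝ F (x + r • v) v :=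
    hdiff.mono fun r => hderiv
  have hF' : DifferentiableAt ℝ (fun y => fderiv ℝ F y v) (x + (0 : ℝ) • v) := by
    simpa using (contDiffAt_fderiv_apply_const hF one_add_one_eq_two.le v).differentiableAt
      one_ne_zero
  rw [hfirst.deriv_eq, hderiv hF', zero_smul, add_zero]

theorem fderiv_fderiv_apply_nonpos_of_isLocalMax (hF : ContDiffAt ℝ 2 F x)
    (hmax : IsLocalMax F x) (v : E) : fderiv ℝ (fun y => fderiv ℝ F y v) x v ≤ 0 := by
  have hline : Filter.Tendsto (fun r : ℝ => x + r • v) (𝓝 0) (𝓝 x) :=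
    Continuous.tendsto' (by fun_prop) _ _ (by simp)
  have hmax_line : IsLocalMax (fun r : ℝ => F (x + r • v)) 0 := by
    simpa [IsLocalMax, IsMaxFilter] using hline.eventually hmax
  have hcont_line : ContinuousAt (fun r : ℝ => F (x + r • v)) 0 := by
    simpa [ContinuousAt, Function.comp_def] using hF.continuousAt.tendsto.comp hline
  rw [← deriv_deriv_comp_add_smul hF v]
  exact deriv_deriv_nonpos_of_isLocalMax hmax_line hcont_line

theorem fderiv_fderiv_apply_add_const_mul {G : E → ℝ} (hF : ContDiffAt ℝ 2 F x)
    (hG : ContDiffAt ℝ 2 G x) (k : ℝ) (v w : E) :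
    fderiv ℝ (fun y => fderiv ℝ (fun z => F z + k * G z) y v) x w =
      fderiv ℝ (fun y => fderiv ℝ F y v) x w + k * fderiv ℝ (fun y => fderiv ℝ G y v) x w := by
  have hfirst : (fun y => fderiv ℝ (fun z => F z + k * G z) y v) =ᶠ[𝓝 x]
      fun y => fderiv ℝ F y v + k * fderiv ℝ G y v := by
    filter_upwards [hF.eventually (by simp), hG.eventually (by simp)] with y hFy hGy
    have hGy := hGy.differentiableAt (by simp)
    rw [fderiv_fun_add (hFy.differentiableAt (by simp)) (hGy.const_mul k), fderiv_const_mul hGy]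
    rfl
  have hF' := (contDiffAt_fderiv_apply_const hF one_add_one_eq_two.le v).differentiableAt
    one_ne_zero
  have hG' := (contDiffAt_fderiv_apply_const hG one_add_one_eq_two.le v).differentiableAt
    one_ne_zero
  rw [hfirst.fderiv_eq, fderiv_fun_add hF' (hG'.const_mul k), fderiv_const_mul hG']
  rfl

end SecondDerivative

section Laplacian

variable {u : ℂ → ℝ} {U : Set ℂ} {t : ℂ}

theorem lapC_nonpos_of_isLocalMax (hu : ContDiffAt ℝ 2 u t) (hmax : IsLocalMax u t) :
    lapC u t ≤ 0 :=
  add_nonpos (fderiv_fderiv_apply_nonpos_of_isLocalMax hu hmax 1)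
    (fderiv_fderiv_apply_nonpos_of_isLocalMax hu hmax Complex.I)

theorem lapC_add_const_mul {w : ℂ → ℝ} (hu : ContDiffAt ℝ 2 u t) (hw : ContDiffAt ℝ 2 w t)
    (k : ℝ) : lapC (fun s => u s + k * w s) t = lapC u t + k * lapC w t := by
  simp only [lapC, fderiv_fderiv_apply_add_const_mul hu hw]
  ring

theorem continuousOn_lapC (hU : IsOpen U) (hu : ContDiffOn ℝ 2 u U) : ContinuousOn (lapC u) U := by
  have hcont (v : ℂ) : ContinuousOn (fun t => fderiv ℝ (fun s => fderiv ℝ u s v) t v) U :=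
    (contDiffOn_fderiv_apply_const hU (contDiffOn_fderiv_apply_const hU hu
      one_add_one_eq_two.le v) (m := 0) (by simp) v).continuousOn
  exact (hcont 1).add (hcont Complex.I)

theorem integral_mul_lapC {ψ : ℂ → ℝ} (hU : IsOpen U) (hu : ContDiffOn ℝ 2 u U)
    (hψ : ContDiff ℝ 2 ψ) (hcomp : HasCompactSupport ψ) (hsub : tsupport ψ ⊆ U) :
    ∫ t, u t * lapC ψ t = ∫ t, lapC u t * ψ t := by
  have hleft (v : ℂ) :
      Integrable fun t => u t * fderiv ℝ (fun s => fderiv ℝ ψ s v) t v :=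
    integrable_mul_of_tsupport_subset hU hu.continuousOn
      (contDiff_fderiv_apply_const (contDiff_fderiv_apply_const hψ one_add_one_eq_two.le v)
        (m := 0) (by simp) v).continuous
      ((hcomp.fderiv_apply ℝ v).fderiv_apply ℝ v)
      ((tsupport_fderiv_apply_subset ℝ v).trans ((tsupport_fderiv_apply_subset ℝ v).trans hsub))
  have hright (v : ℂ) :
      Integrable fun t => fderiv ℝ (fun s => fderiv ℝ u s v) t v * ψ t :=
    integrable_mul_of_tsupport_subset hU
      (contDiffOn_fderiv_apply_const hU (contDiffOn_fderiv_apply_const hU hu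
        one_add_one_eq_two.le v) (m := 0) (by simp) v).continuousOn
      hψ.continuous hcomp hsub
  simp only [lapC, mul_add, add_mul]
  rw [integral_add (hleft _) (hleft _), integral_add (hright _) (hright _),
    integral_mul_fderiv_fderiv_apply hU hu hψ hcomp hsub,
    integral_mul_fderiv_fderiv_apply hU hu hψ hcomp hsub]

theorem le_lapC_of_forall_integral_le {h : ℂ → ℝ} (hU : IsOpen U) (hh : ContinuousOn h U)
    (hu : ContDiffOn ℝ 2 u U)
    (hint : ∀ ψ : ℂ → ℝ, IsTestFun ψ → (∀ t, 0 ≤ ψ t) → tsupport ψ ⊆ U →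
      ∫ t, h t * ψ t ≤ ∫ t, u t * lapC ψ t)
    (ht : t ∈ U) : h t ≤ lapC u t := by
  have hlap := continuousOn_lapC hU hu
  refine sub_nonneg.1 (nonneg_of_forall_integral_mul_nonneg (μ := volume) hU (hlap.sub hh)
    (fun ψ hψ hcomp hψ_nonneg hsub => ?_) ht)
  calc (0 : ℝ) ≤ (∫ t, u t * lapC ψ t) - ∫ t, h t * ψ t :=
        sub_nonneg.2 (hint ψ ⟨hψ, hcomp⟩ hψ_nonneg hsub)
    _ = (∫ t, lapC u t * ψ t) - ∫ t, h t * ψ t := by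
        rw [integral_mul_lapC hU hu (hψ.of_le (by norm_cast)) hcomp hsub]
    _ = ∫ t, (lapC u t - h t) * ψ t := by
        simp only [sub_mul]
        rw [integral_sub
          (integrable_mul_of_tsupport_subset hU hlap hψ.continuous hcomp hsub)
          (integrable_mul_of_tsupport_subset hU hh hψ.continuous hcomp hsub)]

end Laplacian

section PoincareMetric

theorem sq_sub_norm_sub_sq_pos_iff {E : Type*} [SeminormedAddCommGroup E] {a x : E} {R : ℝ}
    (hR : 0 ≤ R) : 0 < R ^ 2 - ‖x - a‖ ^ 2 ↔ x ∈ Metric.ball a R := by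
  rw [sub_pos, sq_lt_sq₀ (norm_nonneg _) hR, mem_ball_iff_norm]

variable {E : Type*} [NormedAddCommGroup E] [InnerProductSpace ℝ E] {a x : E} {R : ℝ}

theorem contDiffAt_log_sq_sub_norm_sub_sq {n : WithTop ℕ∞} (hx : R ^ 2 - ‖x - a‖ ^ 2 ≠ 0) :
    ContDiffAt ℝ n (fun y => Real.log (R ^ 2 - ‖y - a‖ ^ 2)) x :=
  (contDiffAt_const.sub ((contDiffAt_id.sub contDiffAt_const).norm_sq ℝ)).log hx

theorem hasFDerivAt_sq_sub_norm_sub_sq :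
    HasFDerivAt (fun y => R ^ 2 - ‖y - a‖ ^ 2) (-(2 • innerSL ℝ (x - a))) x :=
  ((hasFDerivAt_id x).sub_const a).norm_sq.const_sub (R ^ 2)

theorem fderiv_fderiv_log_sq_sub_norm_sub_sq (hx : R ^ 2 - ‖x - a‖ ^ 2 ≠ 0) (v w : E) :
    fderiv ℝ (fun y => fderiv ℝ (fun z => Real.log (R ^ 2 - ‖z - a‖ ^ 2)) y v) x w =
      -(2 * inner ℝ v w * (R ^ 2 - ‖x - a‖ ^ 2) + 4 * inner ℝ (x - a) v * inner ℝ (x - a) w) /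
        (R ^ 2 - ‖x - a‖ ^ 2) ^ 2 := by
  have hfirst : (fun y => fderiv ℝ (fun z => Real.log (R ^ 2 - ‖z - a‖ ^ 2)) y v) =ᶠ[𝓝 x]
      fun y => -2 * inner ℝ (y - a) v * (R ^ 2 - ‖y - a‖ ^ 2)⁻¹ := by
    filter_upwards [(hasFDerivAt_sq_sub_norm_sub_sq (a := a)).continuousAt.eventually_ne hx]
      with y hy
    rw [(hasFDerivAt_sq_sub_norm_sub_sq.log hy).fderiv]
    simp only [smul_apply, neg_apply, innerSL_apply_apply, smul_eq_mul, nsmul_eq_mul,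
      Nat.cast_ofNat]
    ring
  have hnum : HasFDerivAt (fun y : E => -2 * inner ℝ (y - a) v) ((-2 : ℝ) • innerSL ℝ v) x := by
    have hinner := ((innerSL ℝ v).hasFDerivAt (x := x - a)).comp x ((hasFDerivAt_id x).sub_const a)
    simpa [Function.comp_def, real_inner_comm] using hinner.const_mul (-2)
  have hinv : HasFDerivAt (fun y => (R ^ 2 - ‖y - a‖ ^ 2)⁻¹) _ x :=
    (hasDerivAt_inv hx).comp_hasFDerivAt x hasFDerivAt_sq_sub_norm_sub_sq
  rw [hfirst.fderiv_eq, (hnum.fun_mul hinv).fderiv]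
  simp only [add_apply, neg_apply, smul_apply, innerSL_apply_apply, nsmul_eq_mul, Nat.cast_ofNat,
    smul_eq_mul]
  field_simp
  ring

theorem lapC_log_sq_sub_norm_sub_sq {a t : ℂ} {R : ℝ} (ht : R ^ 2 - ‖t - a‖ ^ 2 ≠ 0) :
    lapC (fun s => Real.log (R ^ 2 - ‖s - a‖ ^ 2)) t =
      -(4 * R ^ 2) / (R ^ 2 - ‖t - a‖ ^ 2) ^ 2 := by
  have hre (z : ℂ) : inner ℝ z 1 = z.re := by simp [Complex.inner]
  have him (z : ℂ) : inner ℝ z Complex.I = z.im := by simp [Complex.inner]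
  have hnorm : ‖t - a‖ ^ 2 = (t - a).re ^ 2 + (t - a).im ^ 2 := by
    rw [Complex.sq_norm, Complex.normSq_apply, sq, sq]
  rw [lapC, fderiv_fderiv_log_sq_sub_norm_sub_sq ht, fderiv_fderiv_log_sq_sub_norm_sub_sq ht,
    ← add_div, real_inner_self_eq_norm_sq, real_inner_self_eq_norm_sq, norm_one, Complex.norm_I,
    hre, him]
  congr 1
  linear_combination 4 * hnorm

end PoincareMetric

section AhlforsSchwarz

variable {c : ℂ → ℝ} {a : ℂ} {R ρ : ℝ}

theorem ahlfors_le_of_isLocalMax {m : ℂ} (hm : m ∈ Metric.ball a R)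
    (hc : ContDiffAt ℝ 2 c m) (hcm : 0 < c m)
    (hcurv : 4 * ρ * c m ≤ lapC (fun s => Real.log (c s)) m)
    (hmax : IsLocalMax (fun t => c t * (R ^ 2 - ‖t - a‖ ^ 2) ^ 2) m) :
    ρ * (c m * (R ^ 2 - ‖m - a‖ ^ 2) ^ 2) ≤ 2 * R ^ 2 := by
  have hR : 0 ≤ R := (Metric.pos_of_mem_ball hm).le
  have hq : 0 < R ^ 2 - ‖m - a‖ ^ 2 := (sq_sub_norm_sub_sq_pos_iff hR).2 hm
  have hlogc := hc.log hcm.ne'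
  have hlogq := contDiffAt_log_sq_sub_norm_sub_sq (n := 2) hq.ne'
  have hlog {t : ℂ} (ht : 0 < c t) (hqt : 0 < R ^ 2 - ‖t - a‖ ^ 2) :
      Real.log (c t) + 2 * Real.log (R ^ 2 - ‖t - a‖ ^ 2) =
        Real.log (c t * (R ^ 2 - ‖t - a‖ ^ 2) ^ 2) := by
    rw [Real.log_mul ht.ne' (by positivity), Real.log_pow, Nat.cast_ofNat]
  have hmax_log : IsLocalMax
      (fun t => Real.log (c t) + 2 * Real.log (R ^ 2 - ‖t - a‖ ^ 2)) m := by
    filter_upwards [hmax, hc.continuousAt.eventually (eventually_gt_nhds hcm),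
      Metric.isOpen_ball.mem_nhds hm] with t hle hct ht
    have hqt : 0 < R ^ 2 - ‖t - a‖ ^ 2 := (sq_sub_norm_sub_sq_pos_iff hR).2 ht
    rw [hlog hct hqt, hlog hcm hq]
    exact Real.log_le_log (by positivity) hle
  have hlap : lapC (fun t => Real.log (c t)) m
      + 2 * (-(4 * R ^ 2) / (R ^ 2 - ‖m - a‖ ^ 2) ^ 2) ≤ 0 := by
    rw [← lapC_log_sq_sub_norm_sub_sq hq.ne', ← lapC_add_const_mul hlogc hlogq]
    exact lapC_nonpos_of_isLocalMax (hlogc.add (contDiffAt_const.mul hlogq)) hmax_log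
  have hle : 4 * ρ * c m ≤ 8 * R ^ 2 / (R ^ 2 - ‖m - a‖ ^ 2) ^ 2 := by
    linear_combination hcurv + hlap
  linear_combination (1 / 4) * (le_div_iff₀ (by positivity)).1 hle

-- The Ahlfors lemma: a metric of curvature at most `-2 ρ` is dominated by the Poincaré metric.
theorem ahlfors_le_of_forall_le_lapC_log (hρ : 0 ≤ ρ)
    (hcont : ContinuousOn c (Metric.closedBall a R))
    (hc : ∀ t ∈ Metric.ball a R, 0 < c t → ContDiffAt ℝ 2 c t)
    (hcurv : ∀ t ∈ Metric.ball a R, 0 < c t → 4 * ρ * c t ≤ lapC (fun s => Real.log (c s)) t)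
    {t : ℂ} (ht : t ∈ Metric.ball a R) :
    ρ * (c t * (R ^ 2 - ‖t - a‖ ^ 2) ^ 2) ≤ 2 * R ^ 2 := by
  have hR : 0 ≤ R := (Metric.pos_of_mem_ball ht).le
  rcases le_or_gt (c t) 0 with hct | hct
  · exact (mul_nonpos_of_nonneg_of_nonpos hρ
      (mul_nonpos_of_nonpos_of_nonneg hct (sq_nonneg _))).trans (by positivity)
  obtain ⟨m, hm, hmax⟩ := (isCompact_closedBall a R).exists_isMaxOn
    ⟨t, Metric.ball_subset_closedBall ht⟩
    (f := fun s => c s * (R ^ 2 - ‖s - a‖ ^ 2) ^ 2) (hcont.mul (by fun_prop))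
  have htm : c t * (R ^ 2 - ‖t - a‖ ^ 2) ^ 2 ≤ c m * (R ^ 2 - ‖m - a‖ ^ 2) ^ 2 :=
    hmax (Metric.ball_subset_closedBall ht)
  have hprod : 0 < c m * (R ^ 2 - ‖m - a‖ ^ 2) ^ 2 :=
    (mul_pos hct (pow_pos ((sq_sub_norm_sub_sq_pos_iff hR).2 ht) 2)).trans_le htm
  have hcm : 0 < c m := pos_of_mul_pos_left hprod (sq_nonneg _)
  have hm_ball : m ∈ Metric.ball a R := by
    refine (Metric.mem_closedBall.1 hm).lt_of_ne fun hdist => hprod.ne' ?_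
    rw [← dist_eq_norm, hdist, sub_self, zero_pow two_ne_zero, mul_zero]
  calc ρ * (c t * (R ^ 2 - ‖t - a‖ ^ 2) ^ 2)
      ≤ ρ * (c m * (R ^ 2 - ‖m - a‖ ^ 2) ^ 2) := by gcongr
    _ ≤ 2 * R ^ 2 := ahlfors_le_of_isLocalMax hm_ball (hc m hm_ball hcm) hcm
        (hcurv m hm_ball hcm)
        (hmax.isLocalMax (Metric.closedBall_mem_nhds_of_mem hm_ball))

theorem nonpos_of_forall_le_lapC_log (hρ : 0 < ρ) (hcont : Continuous c)
    (hc : ContDiffOn ℝ 2 c {t | 0 < c t})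
    (hcurv : ∀ t, 0 < c t → 4 * ρ * c t ≤ lapC (fun s => Real.log (c s)) t) (t : ℂ) :
    c t ≤ 0 := by
  have hopen : IsOpen {t | 0 < c t} := isOpen_lt continuous_const hcont
  have hbound (R : ℝ) (hR : 0 < R) : ρ * c t * R ^ 2 ≤ 2 := by
    have hcenter := ahlfors_le_of_forall_le_lapC_log hρ.le hcont.continuousOn
      (fun s _ hs => hc.contDiffAt (hopen.mem_nhds hs)) (fun s _ => hcurv s)
      (Metric.mem_ball_self (x := t) hR)
    rw [sub_self, norm_zero, zero_pow two_ne_zero, sub_zero] at hcenter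
    refine le_of_mul_le_mul_right ?_ (pow_pos hR 2)
    linear_combination hcenter
  by_contra! hpos
  have hbig := hbound √(3 / (ρ * c t)) (by positivity)
  rw [Real.sq_sqrt (by positivity), mul_div_cancel₀ _ (by positivity)] at hbig
  norm_num at hbig

end AhlforsSchwarz

theorem contDiff_of_locally_eq_mul_norm_sq {c : ℂ → ℝ}
    (hloc : ∀ t₀ : ℂ, ∃ U ∈ 𝓝 t₀, ∃ φ : ℂ → ℝ, ∃ f : ℂ → ℂ,
      ContDiffOn ℝ (⊤ : ℕ∞) φ U ∧ DifferentiableOn ℂ f U ∧ ∀ t ∈ U, c t = φ t * ‖f t‖ ^ 2) :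
    ContDiff ℝ (⊤ : ℕ∞) c := by
  refine contDiff_iff_contDiffAt.2 fun t₀ => ?_
  obtain ⟨U, hU, φ, f, hφ, hf, hc⟩ := hloc t₀
  have hf_smooth : ContDiffAt ℝ (⊤ : ℕ∞) f t₀ :=
    (hf.analyticAt hU).contDiffAt.restrict_scalars ℝ
  exact ((hφ.contDiffAt hU).mul (hf_smooth.norm_sq ℝ)).congr_of_eventuallyEq
    (Filter.eventually_of_mem hU hc)

-- Only test functions supported in `{c > 0}` are needed, where no question of the local
-- integrability of `log c` arises.
theorem stmt_5_general (c : ℂ → ℝ) (hcont : Continuous c) (hc : ContDiffOn ℝ 2 c {t | 0 < c t})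
    (hpos : ∃ t, 0 < c t) :
    ¬ ∃ ρ : ℝ, 0 < ρ ∧ ∀ ψ : ℂ → ℝ, IsTestFun ψ → (∀ t, 0 ≤ ψ t) →
      tsupport ψ ⊆ {t | 0 < c t} →
      ρ * ∫ t : ℂ, c t * ψ t ≤ (1 / 4) * ∫ t : ℂ, Real.log (c t) * lapC ψ t := by
  rintro ⟨ρ, hρ, hineq⟩
  obtain ⟨a, ha⟩ := hpos
  refine ha.not_ge (nonpos_of_forall_le_lapC_log hρ hcont hc (fun t ht => ?_) a)
  refine le_lapC_of_forall_integral_le (h := fun s => 4 * ρ * c s)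
    (isOpen_lt continuous_const hcont) (continuous_const.mul hcont).continuousOn
    (hc.log fun s hs => ne_of_gt hs) (fun ψ hψ hψ_nonneg hsub => ?_) ht
  have hscale : ∫ s, 4 * ρ * c s * ψ s = 4 * (ρ * ∫ s, c s * ψ s) := by
    simp only [mul_assoc, integral_const_mul]
  linarith [hineq ψ hψ hψ_nonneg hsub]

/- STATEMENT 5 (Ahlfors–Schwarz lemma, current form): Let c : ℂ → ℝ≥0 be locally of the
form φ·|f|² with φ smooth positive and f holomorphic, and c not identically zero.  Then
there is no ρ > 0 with ∂_t∂_{t̄} log c ≥ ρ·c in the sense of currents (distributions),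
i.e. such that for every nonnegative test function ψ one has
  (1/4)∫ log c · Δψ ≥ ρ ∫ c·ψ. -/
theorem stmt_5 (c : ℂ → ℝ) (hc0 : ∀ t, 0 ≤ c t)
    (hloc : ∀ t₀ : ℂ, ∃ U ∈ nhds t₀, ∃ φ : ℂ → ℝ, ∃ f : ℂ → ℂ,
      ContDiffOn ℝ (⊤ : ℕ∞) φ U ∧ (∀ t ∈ U, 0 < φ t) ∧ DifferentiableOn ℂ f U ∧
      ∀ t ∈ U, c t = φ t * ‖f t‖ ^ 2)
    (hne : ∃ t, c t ≠ 0) :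
    ¬ ∃ ρ : ℝ, 0 < ρ ∧ ∀ ψ : ℂ → ℝ, IsTestFun ψ → (∀ t, 0 ≤ ψ t) →
      ρ * ∫ t : ℂ, c t * ψ t ≤ (1 / 4) * ∫ t : ℂ, Real.log (c t) * lapC ψ t := by
  rintro ⟨ρ, hρ, hineq⟩
  have hc : ContDiff ℝ (⊤ : ℕ∞) c := contDiff_of_locally_eq_mul_norm_sq fun t₀ =>
    let ⟨U, hU, φ, f, hφ, _, hf, heq⟩ := hloc t₀
    ⟨U, hU, φ, f, hφ, hf, heq⟩
  exact stmt_5_general c hc.continuous (hc.of_le (by norm_cast)).contDiffOn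
    (hne.imp fun t ht => (hc0 t).lt_of_ne' ht)
    ⟨ρ, hρ, fun ψ hψ hψ_nonneg _ => hineq ψ hψ hψ_nonneg⟩
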